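/- Let r ≥ 2, n ≥ 2r, and let H be an M_1^{(r)}-saturated r-cgh on Ω_n. Then there exist ℓ ≥ 1 and distinct vertices w_1, …, w_{2ℓ+1} ∈ Ω_n with the cyclic order w_1 < w_3 < w_5 < ⋯ < w_{2ℓ+1} < w_2 < w_4 < ⋯ < w_{2ℓ} < w_1, such that λ(w_i) = w_{i+1} and ρ(w_i) = w_{i-1} for all i (indices read modulo 2ℓ+1). -/

import Mathlib

/-!
Two `r`-sets form a copy of `M_1^{(r)}` exactly when some arc contains one and avoids the other
(`Separated`). So in a saturated family `H` no two edges are separated, and every `r`-set outside `H`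
is separated from some edge. Call an arc full if it contains an edge. Since `r ≥ 2`, one can test an
`r`-set using both endpoints of an arc, and this shows that of two complementary arcs exactly one is
full (`IsSat.full_compl_iff`). The same test shows that `λ(v)` is the last `j` such that `[j, v]` is
full, with no need to require that the edge contains `v`, and likewise for `ρ`.

Write `S` for the range of `λ`. Complementation gives `ρ(v) = λ(v - 1)`, so `S` is also the range of
`ρ`. Minimality of the arcs gives `λρλ = λ` and `ρλρ = ρ`, so `λ` permutes `S` with inverse `ρ`.
Moreover `λ` is constant on each stretch from a point of `S` up to just before the next point `s`
of `S`, so `λ²` sends each point of `S` to `λ(λ(s - 1)) = λ(ρ(s)) = s`, its cyclic successor in `S`.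

Let `N = |S|` and let `s₀` be a point of `S`. Then `λ(s₀) = λ^{2q}(s₀)` for some `0 < q < N`, so
`λ^{2q-1}(s₀) = s₀`; applying this twice gives `N ∣ 2q - 1 < 2N`, that is, `N = 2q - 1`. Hence `N` is
odd, `s₀, λ(s₀), …, λ^{N-1}(s₀)` runs through all of `S`, and its even iterates are in cyclic order.
Finally `N ≠ 1` because `λ` has no fixed point.
-/

open Finset

/-- An abstract convex geometric hypergraph: `m` vertices on a circle, with the
cyclic ordering `0 < 1 < ⋯ < m-1 < 0`, together with a family of edges. -/
structure CGH where
  m : ℕ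
  edges : Finset (Finset (Fin m))

/-- A list of points of `Fin n` is in (strict) cyclic order if some rotation of it
is strictly increasing in the linear order of `Fin n`. -/
def CyclicSorted {n : ℕ} (l : List (Fin n)) : Prop :=
  ∃ k : ℕ, (l.rotate k).Chain' (· < ·)

/-- `H` contains a subhypergraph isomorphic to the convex geometric hypergraph `F`:
there is an injection of the vertices of `F` into `Fin n` respecting the cyclic
orderings and sending every edge of `F` to an edge of `H`. -/
def HasCopy (F : CGH) {n : ℕ} (H : Finset (Finset (Fin n))) : Prop :=
  ∃ f : Fin F.m → Fin n, Function.Injective f ∧ CyclicSorted (List.ofFn f) ∧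
    ∀ e ∈ F.edges, e.image f ∈ H

/-- `H` is an `F`-saturated `r`-uniform convex geometric hypergraph on `Fin n`. -/
def IsSat (F : CGH) (r : ℕ) {n : ℕ} (H : Finset (Finset (Fin n))) : Prop :=
  (∀ h ∈ H, h.card = r) ∧ ¬ HasCopy F H ∧
    ∀ e : Finset (Fin n), e.card = r → e ∉ H → HasCopy F (insert e H)

/-- The saturation number `sat_○(n, F)` for `r`-uniform cgh's on `Fin n`. -/
noncomputable def satNum (F : CGH) (r n : ℕ) : ℕ :=
  sInf {k | ∃ H : Finset (Finset (Fin n)), IsSat F r H ∧ H.card = k}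

/-- `M_1^{(r)}`: two geometrically disjoint `r`-tuples. -/
def M1r (r : ℕ) : CGH where
  m := 2 * r
  edges := {Finset.univ.filter (fun i : Fin (2 * r) => (i : ℕ) < r),
            Finset.univ.filter (fun i : Fin (2 * r) => r ≤ (i : ℕ))}

def M1cgh : CGH := ⟨6, {({0, 1, 2} : Finset (Fin 6)), ({3, 4, 5} : Finset (Fin 6))}⟩
def M2cgh : CGH := ⟨6, {({0, 1, 3} : Finset (Fin 6)), ({2, 4, 5} : Finset (Fin 6))}⟩
def M3cgh : CGH := ⟨6, {({0, 2, 4} : Finset (Fin 6)), ({1, 3, 5} : Finset (Fin 6))}⟩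
def S1cgh : CGH := ⟨5, {({0, 1, 4} : Finset (Fin 5)), ({0, 2, 3} : Finset (Fin 5))}⟩
def S2cgh : CGH := ⟨5, {({0, 1, 2} : Finset (Fin 5)), ({0, 3, 4} : Finset (Fin 5))}⟩
def S3cgh : CGH := ⟨5, {({0, 1, 3} : Finset (Fin 5)), ({0, 2, 4} : Finset (Fin 5))}⟩
def D1cgh : CGH := ⟨4, {({0, 1, 2} : Finset (Fin 4)), ({0, 2, 3} : Finset (Fin 4))}⟩
def D2cgh : CGH := ⟨4, {({0, 1, 2} : Finset (Fin 4)), ({0, 1, 3} : Finset (Fin 4))}⟩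

/-- The closed clockwise arc `[a, b]` in `Fin n`. -/
def arcCC {n : ℕ} (a b : Fin n) : Finset (Fin n) :=
  if a ≤ b then Finset.univ.filter (fun x => a ≤ x ∧ x ≤ b)
  else Finset.univ.filter (fun x => a ≤ x ∨ x ≤ b)

/-- The open clockwise arc `(a, b)` in `Fin n`. -/
def arcOO {n : ℕ} (a b : Fin n) : Finset (Fin n) :=
  if a < b then Finset.univ.filter (fun x => a < x ∧ x < b)
  else Finset.univ.filter (fun x => a < x ∨ x < b)

/-- The tuple `(w_1, …, w_{2ℓ+1})` (`0`-indexed here) consists of distinct points with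
`w_1 < w_3 < ⋯ < w_{2ℓ+1} < w_2 < w_4 < ⋯ < w_{2ℓ} < w_1` in the cyclic order. -/
def SemiValid {n : ℕ} (ℓ : ℕ) (w : Fin (2 * ℓ + 1) → Fin n) : Prop :=
  Function.Injective w ∧
    CyclicSorted (List.ofFn fun p : Fin (2 * ℓ + 1) =>
      w ⟨(2 * (p : ℕ)) % (2 * ℓ + 1), Nat.mod_lt _ (by omega)⟩)

/-- A semi-valid tuple is `r`-valid if moreover `|[w_i, w_{i-1}]| ≥ r` for all `i`. -/
def RValid {n : ℕ} (r ℓ : ℕ) (w : Fin (2 * ℓ + 1) → Fin n) : Prop :=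
  SemiValid ℓ w ∧ ∀ i : Fin (2 * ℓ + 1), r ≤ (arcCC (w i) (w (i - 1))).card

/-- `H_n^{(r)}(C)`: all `r`-sets meeting every interval `[w_i, w_{i-1}]`. -/
def HnC {n : ℕ} (r ℓ : ℕ) (w : Fin (2 * ℓ + 1) → Fin n) : Finset (Finset (Fin n)) :=
  (Finset.powersetCard r Finset.univ).filter fun e =>
    ∀ i : Fin (2 * ℓ + 1), (e ∩ arcCC (w i) (w (i - 1))).Nonempty

/-- `j` is the vertex `λ(v)` for `v` in `H`. -/
def IsLam {n : ℕ} [NeZero n] (H : Finset (Finset (Fin n))) (v j : Fin n) : Prop :=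
  (∃ h ∈ H, v ∈ h ∧ h ⊆ arcCC j v) ∧ ¬ ∃ h ∈ H, v ∈ h ∧ h ⊆ arcCC (j + 1) v

/-- `j` is the vertex `ρ(v)` for `v` in `H`. -/
def IsRho {n : ℕ} [NeZero n] (H : Finset (Finset (Fin n))) (v j : Fin n) : Prop :=
  (∃ h ∈ H, v ∈ h ∧ h ⊆ arcCC v j) ∧ ¬ ∃ h ∈ H, v ∈ h ∧ h ⊆ arcCC v (j - 1)

noncomputable def lamF {n : ℕ} [NeZero n] (H : Finset (Finset (Fin n))) (v : Fin n) : Fin n :=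
  letI := Classical.propDecidable (∃ j, IsLam H v j)
  if h : ∃ j, IsLam H v j then h.choose else v

noncomputable def rhoF {n : ℕ} [NeZero n] (H : Finset (Finset (Fin n))) (v : Fin n) : Fin n :=
  letI := Classical.propDecidable (∃ j, IsRho H v j)
  if h : ∃ j, IsRho H v j then h.choose else v

/-- Strict cyclic betweenness on `Fin n`. -/
def CyclicSbtw {n : ℕ} (a b c : Fin n) : Prop :=
  (a < b ∧ b < c) ∨ (b < c ∧ c < a) ∨ (c < a ∧ a < b)

/-- Isomorphism of two cgh's on `Fin n`: a bijection of the vertex set respecting the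
cyclic order and inducing a bijection of the edge sets. -/
def CGHIso {n : ℕ} (H H' : Finset (Finset (Fin n))) : Prop :=
  ∃ g : Fin n ≃ Fin n,
    (∀ a b c : Fin n, CyclicSbtw a b c → CyclicSbtw (g a) (g b) (g c)) ∧
    ∀ e : Finset (Fin n), e ∈ H ↔ e.image g ∈ H'

/-- The 3-cgh `H_n^{(3)}`: all triples containing `v_0`, together with all triples
containing one of the pairs `{v_1, v_{n-2}}`, `{v_1, v_{n-1}}`, `{v_2, v_{n-1}}`. -/
def Hn3 (n : ℕ) (hn : 6 ≤ n) : Finset (Finset (Fin n)) :=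
  (Finset.powersetCard 3 Finset.univ).filter fun e =>
    (⟨0, by omega⟩ : Fin n) ∈ e ∨
    ((⟨1, by omega⟩ : Fin n) ∈ e ∧ (⟨n - 2, by omega⟩ : Fin n) ∈ e) ∨
    ((⟨1, by omega⟩ : Fin n) ∈ e ∧ (⟨n - 1, by omega⟩ : Fin n) ∈ e) ∨
    ((⟨2, by omega⟩ : Fin n) ∈ e ∧ (⟨n - 1, by omega⟩ : Fin n) ∈ e)

/-- Saturation with respect to a family of cgh's. -/
def FamSat (ℱ : Set CGH) (r : ℕ) {n : ℕ} (H : Finset (Finset (Fin n))) : Prop :=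
  (∀ h ∈ H, h.card = r) ∧ (∀ F ∈ ℱ, ¬ HasCopy F H) ∧
    ∀ e : Finset (Fin n), e.card = r → e ∉ H → ∃ F ∈ ℱ, HasCopy F (insert e H)

noncomputable def famSatNum (ℱ : Set CGH) (r n : ℕ) : ℕ :=
  sInf {k | ∃ H : Finset (Finset (Fin n)), FamSat ℱ r H ∧ H.card = k}

/-- Rotation of a point of `Fin n` by an integer amount `m`. -/
def finShift {n : ℕ} (hn : 0 < n) (v : Fin n) (m : ℤ) : Fin n :=
  ⟨(((v : ℤ) + m) % (n : ℤ)).toNat, by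
    have h0 : (0 : ℤ) < (n : ℤ) := by exact_mod_cast hn
    have h1 := Int.emod_nonneg ((v : ℤ) + m) (by omega : (n : ℤ) ≠ 0)
    have h2 := Int.emod_lt_of_pos ((v : ℤ) + m) h0
    omega⟩

/-- The tuple `w` is `(i,k)`-consecutive: starting from position `i`, the entries at
positions `i, i+2, …, i+2(k-1)` are `k` consecutive points `v_j, v_{j+1}, …, v_{j+k-1}`. -/
def ConsecAt {n ℓ : ℕ} (hn : 0 < n) (w : Fin (2 * ℓ + 1) → Fin n)
    (i : Fin (2 * ℓ + 1)) (k : ℕ) : Prop :=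
  ∃ j : Fin n, ∀ s : ℕ, s < k →
    w (i + ⟨(2 * s) % (2 * ℓ + 1), Nat.mod_lt _ (by omega)⟩) = finShift hn j s

/-- The tuple `C_{i,k,m}`: the `k` consecutive points at positions `i, i+2, …, i+2(k-1)`
are rotated by `m` units; all other entries are unchanged. -/
def shiftTuple {n ℓ : ℕ} (hn : 0 < n) (w : Fin (2 * ℓ + 1) → Fin n)
    (i : Fin (2 * ℓ + 1)) (k : ℕ) (m : ℤ) : Fin (2 * ℓ + 1) → Fin n :=
  fun p => if (p - i).val % 2 = 0 ∧ (p - i).val / 2 < k then finShift hn (w p) m else w p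

/-! ### Arcs of `Fin n` in coordinates -/

/-- Membership in an arc in terms of representatives, the form used by `omega`. -/
lemma mem_arcCC {n : ℕ} (a b x : Fin n) :
    x ∈ arcCC a b ↔ ((a : ℕ) ≤ b ∧ (a : ℕ) ≤ x ∧ (x : ℕ) ≤ b) ∨
      ((b : ℕ) < a ∧ ((a : ℕ) ≤ x ∨ (x : ℕ) ≤ b)) := by
  unfold arcCC
  split_ifs with h
  · simp only [mem_filter, mem_univ, true_and, Fin.le_def] at *
    omega
  · simp only [mem_filter, mem_univ, true_and, Fin.le_def] at *
    omega

lemma val_sub_cases {n : ℕ} (x a : Fin n) :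
    ((a : ℕ) ≤ x ∧ ((x - a : Fin n) : ℕ) = x - a) ∨
      ((x : ℕ) < a ∧ ((x - a : Fin n) : ℕ) = x + n - a) := by
  rcases le_or_gt a x with h | h
  · left; exact ⟨h, Fin.sub_val_of_le h⟩
  · right; refine ⟨h, ?_⟩
    rw [Fin.coe_sub_iff_lt.mpr h]; have := a.2; omega

lemma val_add_cases {n : ℕ} (x a : Fin n) :
    ((a : ℕ) + x < n ∧ ((a + x : Fin n) : ℕ) = a + x) ∨
      (n ≤ (a : ℕ) + x ∧ ((a + x : Fin n) : ℕ) + n = a + x) := by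
  have hx := x.2
  have ha := a.2
  rw [Fin.val_add]
  rcases lt_or_ge ((a : ℕ) + x) n with h | h
  · left; exact ⟨h, Nat.mod_eq_of_lt h⟩
  · right
    refine ⟨h, ?_⟩
    rw [Nat.mod_eq_sub_mod h, Nat.mod_eq_of_lt (by omega)]; omega

lemma val_add_one_cases {n : ℕ} [NeZero n] (hn : 2 ≤ n) (x : Fin n) :
    ((x : ℕ) + 1 < n ∧ ((x + 1 : Fin n) : ℕ) = x + 1) ∨
      ((x : ℕ) + 1 = n ∧ ((x + 1 : Fin n) : ℕ) = 0) := by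
  have h1 : ((1 : Fin n) : ℕ) = 1 := by
    rw [Fin.val_one', Nat.mod_eq_of_lt (by omega)]
  have := x.2
  rcases val_add_cases 1 x with h | h <;> rw [h1] at h <;> omega

lemma val_sub_one_cases {n : ℕ} [NeZero n] (hn : 2 ≤ n) (x : Fin n) :
    (1 ≤ (x : ℕ) ∧ ((x - 1 : Fin n) : ℕ) + 1 = x) ∨
      ((x : ℕ) = 0 ∧ ((x - 1 : Fin n) : ℕ) + 1 = n) := by
  have h1 : ((1 : Fin n) : ℕ) = 1 := by
    rw [Fin.val_one', Nat.mod_eq_of_lt (by omega)]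
  have := x.2
  rcases val_sub_cases x 1 with h | h <;> rw [h1] at h <;> omega

/-- Rotating by `-a` turns the arc `[a, b]` into an initial segment of `Fin n`. -/
lemma mem_arcCC_iff_sub {n : ℕ} (a b x : Fin n) :
    x ∈ arcCC a b ↔ ((x - a : Fin n) : ℕ) ≤ ((b - a : Fin n) : ℕ) := by
  rw [mem_arcCC]
  have := x.2
  have := a.2
  have := b.2
  rcases val_sub_cases x a with h | h <;> rcases val_sub_cases b a with h' | h' <;> omega

lemma card_arcCC {n : ℕ} (a b : Fin n) : (arcCC a b).card = ((b - a : Fin n) : ℕ) + 1 := by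
  have := a.2
  have hb := b.2
  have hn : NeZero n := ⟨by omega⟩
  have : arcCC a b = (Finset.Iic (b - a)).map (Equiv.addRight a).toEmbedding := by
    ext x
    rw [mem_arcCC_iff_sub, Finset.mem_map_equiv]
    rw [Finset.mem_Iic, Fin.le_def, Equiv.addRight_symm, Equiv.coe_addRight, sub_eq_add_neg x a]
  rw [this, Finset.card_map, Fin.card_Iic]

/-! ### Cyclically sorted lists -/

/-- A cyclically sorted tuple becomes strictly increasing after rotating its first entry to `0`. -/
lemma CyclicSorted.strictMono_sub {n m : ℕ} (hm : 0 < m) (f : Fin m → Fin n)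
    (h : CyclicSorted (List.ofFn f)) : StrictMono fun i => f i - f ⟨0, hm⟩ := by
  obtain ⟨k, hk⟩ := h
  have hk' := List.isChain_iff_pairwise.mp hk
  rw [List.pairwise_iff_getElem] at hk'
  have key : ∀ i j : ℕ, i < j → (hj : j < m) →
      f ⟨(i + k) % m, Nat.mod_lt _ hm⟩ < f ⟨(j + k) % m, Nat.mod_lt _ hm⟩ := by
    intro i j hij hj
    have := hk' i j (by simp; omega) (by simpa using hj) hij
    simpa [List.getElem_rotate] using this
  -- `c` is the position of `f 0` in the sorted rotation
  obtain ⟨c, hc, hck⟩ : ∃ c, c < m ∧ (c + k) % m = 0 := by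
    refine ⟨(m - k % m) % m, Nat.mod_lt _ hm, ?_⟩
    have := Nat.mod_lt k hm
    rw [Nat.mod_add_mod, Nat.add_mod, ← Nat.add_mod]
    have h2 : m - k % m + k = m * (1 + k / m) := by
      have := Nat.mod_add_div k m
      rw [mul_add]; omega
    rw [h2]; simp
  have hidx : ∀ i : Fin m, (c + i + k) % m = i := by
    intro i
    rw [add_right_comm, Nat.add_mod, hck, zero_add, Nat.mod_mod, Nat.mod_eq_of_lt i.2]
  have hidx' : ∀ i : Fin m, m ≤ c + i → (c + i - m + k) % m = i := by
    intro i hi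
    have h1 := hidx i
    rw [show c + i + k = (c + i - m + k) + m by omega, Nat.add_mod_right] at h1
    exact h1
  have hz : (⟨(c + k) % m, Nat.mod_lt _ hm⟩ : Fin m) = ⟨0, hm⟩ := Fin.ext hck
  intro i j hij
  have hij' : (i : ℕ) < j := hij
  have hi := i.2
  have hj := j.2
  simp only [Fin.lt_def]
  have e1 : ∀ i : Fin m, (⟨(c + i + k) % m, Nat.mod_lt _ hm⟩ : Fin m) = i :=
    fun i => Fin.ext (hidx i)
  have e2 : ∀ i : Fin m, m ≤ c + i →
      (⟨(c + i - m + k) % m, Nat.mod_lt _ hm⟩ : Fin m) = i :=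
    fun i h => Fin.ext (hidx' i h)
  -- comparison with the value at `0`
  have low : ∀ i : Fin m, c + i < m → f ⟨0, hm⟩ ≤ f i := by
    intro i h
    rcases Nat.eq_zero_or_pos (i : ℕ) with h0 | h0
    · have : i = ⟨0, hm⟩ := Fin.ext h0
      rw [this]
    · have := key c (c + i) (by omega) h
      rw [hz, e1] at this
      exact this.le
  have high : ∀ i : Fin m, m ≤ c + i → f i < f ⟨0, hm⟩ := by
    intro i h
    have := key (c + i - m) c (by omega) hc
    rwa [hz, e2 i h] at this
  have b0 := (f ⟨0, hm⟩).2
  have bi := (f i).2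
  have bj := (f j).2
  simp only [Fin.le_def, Fin.lt_def] at low high key
  rcases lt_or_ge (c + (i : ℕ)) m with h1 | h1 <;> rcases lt_or_ge (c + (j : ℕ)) m with h2 | h2
  · have l1 := low i h1
    have l2 := low j h2
    have := key (c + i) (c + j) (by omega) h2
    rw [e1, e1] at this
    rcases val_sub_cases (f i) (f ⟨0, hm⟩) with h | h <;>
      rcases val_sub_cases (f j) (f ⟨0, hm⟩) with h' | h' <;> omega
  · have l1 := low i h1
    have l2 := high j h2
    rcases val_sub_cases (f i) (f ⟨0, hm⟩) with h | h <;>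
      rcases val_sub_cases (f j) (f ⟨0, hm⟩) with h' | h' <;> omega
  · omega
  · have l1 := high i h1
    have l2 := high j h2
    have := key (c + i - m) (c + j - m) (by omega) (by omega)
    rw [e2 i h1, e2 j h2] at this
    rcases val_sub_cases (f i) (f ⟨0, hm⟩) with h | h <;>
      rcases val_sub_cases (f j) (f ⟨0, hm⟩) with h' | h' <;> omega

/-- Any rotation of a strictly increasing tuple is cyclically sorted. -/
lemma cyclicSorted_add {n m : ℕ} (a : Fin n) (g : Fin m → Fin n) (hg : StrictMono g) :
    CyclicSorted (List.ofFn fun i => a + g i) := by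
  -- rotate to the first position at which `a + g i` wraps around
  obtain ⟨k, hkm, hk⟩ : ∃ k, k ≤ m ∧ ∀ i : Fin m, (i : ℕ) < k ↔ (a : ℕ) + g i < n := by
    by_cases hex : ∃ k, ∃ h : k < m, n ≤ (a : ℕ) + g ⟨k, h⟩
    · classical
      refine ⟨Nat.find hex, (Nat.find_spec hex).1.le, fun i => ⟨fun hi => ?_, fun hi => ?_⟩⟩
      · have := Nat.find_min hex hi
        by_contra hcon
        exact this ⟨i.2, by simpa using hcon⟩
      · by_contra hcon
        obtain ⟨h1, h2⟩ := Nat.find_spec hex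
        have : g ⟨Nat.find hex, h1⟩ ≤ g i := hg.monotone (by simpa [Fin.le_def] using hcon)
        rw [Fin.le_def] at this
        omega
    · push Not at hex
      exact ⟨m, le_rfl, fun i => ⟨fun _ => hex i i.2, fun _ => i.2⟩⟩
  refine ⟨k, ?_⟩
  refine List.isChain_iff_pairwise.mpr ?_
  rw [List.pairwise_iff_getElem]
  intro i j hi hj hij
  simp only [List.length_rotate, List.length_ofFn] at hi hj
  simp only [List.getElem_rotate, List.length_ofFn, List.getElem_ofFn]
  have hm : 0 < m := by omega
  have idx : ∀ i < m, (i + k < m ∧ (i + k) % m = i + k) ∨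
      (m ≤ i + k ∧ (i + k) % m + m = i + k) := by
    intro i hi
    rcases lt_or_ge (i + k) m with h | h
    · left; exact ⟨h, Nat.mod_eq_of_lt h⟩
    · right
      refine ⟨h, ?_⟩
      rcases Nat.lt_or_ge (i + k - m) m with h' | h'
      · rw [Nat.mod_eq_sub_mod h, Nat.mod_eq_of_lt h']; omega
      · omega
  have hi2 := idx i hi
  have hj2 := idx j hj
  set I : Fin m := ⟨(i + k) % m, Nat.mod_lt _ hm⟩ with hI
  set J : Fin m := ⟨(j + k) % m, Nat.mod_lt _ hm⟩ with hJ
  have hIv : (I : ℕ) = (i + k) % m := rfl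
  have hJv : (J : ℕ) = (j + k) % m := rfl
  rw [← hIv] at hi2
  rw [← hJv] at hj2
  have kI := hk I
  have kJ := hk J
  have bI := (g I).2
  have bJ := (g J).2
  have ba := a.2
  have cI := val_add_cases (g I) a
  have cJ := val_add_cases (g J) a
  have m1 : (I : ℕ) < J → (g I : ℕ) < g J := fun h => hg h
  rw [Fin.lt_def]
  omega

/-! ### Copies of `M_1^{(r)}` and separated pairs -/

/-- Some arc contains `e` and avoids `h`. For two `r`-sets this says that they form a copy of
`M_1^{(r)}` (with `e` as the first edge). The arc may wrap around `0`. -/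
def Separated {n : ℕ} (e h : Finset (Fin n)) : Prop :=
  ∃ c d : Fin n, e ⊆ arcCC c d ∧ ∀ x ∈ h, x ∉ arcCC c d

lemma exists_separated_of_hasCopy {n r : ℕ} (hr : 2 ≤ r) (K : Finset (Finset (Fin n)))
    (h : HasCopy (M1r r) K) : ∃ e ∈ K, ∃ h ∈ K, Separated e h := by
  obtain ⟨f, -, hf, hK⟩ := h
  change Fin (2 * r) → Fin n at f
  have hmono := hf.strictMono_sub (by omega : 0 < 2 * r)
  have hle : ∀ i : Fin (2 * r), f i ∈ arcCC (f ⟨0, by omega⟩) (f ⟨r - 1, by omega⟩) ↔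
      (i : ℕ) < r := by
    intro i
    rw [mem_arcCC_iff_sub, ← Fin.le_def,
      hmono.le_iff_le (a := i) (b := ⟨r - 1, by omega⟩), Fin.le_def]
    show (i : ℕ) ≤ r - 1 ↔ _
    omega
  refine ⟨_, hK _ (Finset.mem_insert_self _ _), _,
    hK _ (Finset.mem_insert_of_mem (Finset.mem_singleton_self _)),
    f ⟨0, by omega⟩, f ⟨r - 1, by omega⟩, ?_, ?_⟩
  · intro x hx
    obtain ⟨i, hi, rfl⟩ := Finset.mem_image.mp hx
    exact (hle i).mpr (Finset.mem_filter.mp hi).2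
  · intro x hx
    obtain ⟨i, hi, rfl⟩ := Finset.mem_image.mp hx
    have : r ≤ (i : ℕ) := (Finset.mem_filter.mp hi).2
    rw [hle i]
    omega

lemma hasCopy_of_separated {n r : ℕ} (K : Finset (Finset (Fin n)))
    {e h : Finset (Fin n)} (he : e ∈ K) (hh : h ∈ K) (hec : e.card = r) (hhc : h.card = r)
    (hs : Separated e h) : HasCopy (M1r r) K := by
  obtain ⟨c, d, hed, hhd⟩ := hs
  have hn : NeZero n := ⟨by have := c.2; omega⟩
  -- rotate so that the arc `[c, d]` starts at `0`
  let E := e.map (Equiv.subRight c).toEmbedding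
  let F := h.map (Equiv.subRight c).toEmbedding
  have hE : E.card = r := by simp [E, hec]
  have hF : F.card = r := by simp [F, hhc]
  have hEF : ∀ x ∈ E, ∀ y ∈ F, x < y := by
    intro x hx y hy
    obtain ⟨x, hxe, rfl⟩ := Finset.mem_map.mp hx
    obtain ⟨y, hyh, rfl⟩ := Finset.mem_map.mp hy
    have h1 := (mem_arcCC_iff_sub c d x).mp (hed hxe)
    have h2 := mt (mem_arcCC_iff_sub c d y).mpr (hhd y hyh)
    rw [Fin.lt_def]
    change ((x - c : Fin n) : ℕ) < ((y - c : Fin n) : ℕ)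
    omega
  let g : Fin (2 * r) → Fin n := fun i =>
    if hi : (i : ℕ) < r then E.orderEmbOfFin hE ⟨i, hi⟩
    else F.orderEmbOfFin hF ⟨i - r, by have := i.2; omega⟩
  have hg : StrictMono g := by
    intro i j hij
    have hij' : (i : ℕ) < j := hij
    by_cases hi : (i : ℕ) < r <;> by_cases hj : (j : ℕ) < r
    · simp only [g, dif_pos hi, dif_pos hj]
      exact (E.orderEmbOfFin hE).strictMono hij
    · simp only [g, dif_pos hi, dif_neg hj]
      exact hEF _ (Finset.orderEmbOfFin_mem _ _ _) _ (Finset.orderEmbOfFin_mem _ _ _)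
    · omega
    · simp only [g, dif_neg hi, dif_neg hj]
      refine (F.orderEmbOfFin hF).strictMono ?_
      rw [Fin.lt_def]
      show (i : ℕ) - r < j - r
      omega
  have hgE : ∀ x ∈ e, ∃ i : Fin (2 * r), (i : ℕ) < r ∧ c + g i = x := by
    intro x hx
    have : x - c ∈ Set.range (E.orderEmbOfFin hE) := by
      rw [Finset.range_orderEmbOfFin]
      exact Finset.mem_coe.mpr (Finset.mem_map.mpr ⟨x, hx, rfl⟩)
    obtain ⟨i, hi⟩ := this
    refine ⟨⟨i, by omega⟩, i.2, ?_⟩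
    simp only [g, dif_pos i.2, Fin.eta, hi]
    abel
  have hgF : ∀ x ∈ h, ∃ i : Fin (2 * r), r ≤ (i : ℕ) ∧ c + g i = x := by
    intro x hx
    have : x - c ∈ Set.range (F.orderEmbOfFin hF) := by
      rw [Finset.range_orderEmbOfFin]
      exact Finset.mem_coe.mpr (Finset.mem_map.mpr ⟨x, hx, rfl⟩)
    obtain ⟨i, hi⟩ := this
    refine ⟨⟨i + r, by omega⟩, by simp, ?_⟩
    have : ¬ ((i : ℕ) + r < r) := by omega
    simp only [g, dif_neg this, Nat.add_sub_cancel, Fin.eta, hi]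
    abel
  have hcard1 : (Finset.univ.filter (fun i : Fin (2 * r) => (i : ℕ) < r)).card = r := by
    rw [Fin.card_filter_val_lt]; omega
  have hcard2 : (Finset.univ.filter (fun i : Fin (2 * r) => r ≤ (i : ℕ))).card = r := by
    have h1 := Finset.card_filter_add_card_filter_not (s := (Finset.univ : Finset (Fin (2 * r))))
      (fun i : Fin (2 * r) => (i : ℕ) < r)
    simp only [not_lt, hcard1, Finset.card_univ, Fintype.card_fin] at h1
    omega
  have hinj : Function.Injective fun i => c + g i :=
    (add_right_injective c).comp hg.injective
  refine ⟨fun i => c + g i, hinj, cyclicSorted_add c g hg, ?_⟩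
  intro s hs
  -- both image sets contain the desired edge and have the same size
  rcases Finset.mem_insert.mp hs with rfl | hs
  · have : e = (Finset.univ.filter (fun i : Fin (2 * r) => (i : ℕ) < r)).image
        (fun i => c + g i) := by
      refine Finset.eq_of_subset_of_card_le (fun x hx => ?_) ?_
      · obtain ⟨i, hi, rfl⟩ := hgE x hx
        exact Finset.mem_image.mpr ⟨i, by simpa using hi, rfl⟩
      · exact Finset.card_image_le.trans (by rw [hcard1, hec])
    exact this ▸ he
  · obtain rfl := Finset.mem_singleton.mp hs
    have : h = (Finset.univ.filter (fun i : Fin (2 * r) => r ≤ (i : ℕ))).image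
        (fun i => c + g i) := by
      refine Finset.eq_of_subset_of_card_le (fun x hx => ?_) ?_
      · obtain ⟨i, hi, rfl⟩ := hgF x hx
        exact Finset.mem_image.mpr ⟨i, by simpa using hi, rfl⟩
      · exact Finset.card_image_le.trans (by rw [hcard2, hhc])
    exact this ▸ hh

/-! ### Full arcs -/

/-- The closed arc `[a, b]` contains an edge of `H`. If `a = b + 1`, this arc is all of `Fin n`. -/
def Full {n : ℕ} (H : Finset (Finset (Fin n))) (a b : Fin n) : Prop :=
  ∃ h ∈ H, h ⊆ arcCC a b

section
variable {n r : ℕ} {H : Finset (Finset (Fin n))}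

lemma IsSat.card_eq (hH : IsSat (M1r r) r H) {h : Finset (Fin n)} (hh : h ∈ H) : h.card = r :=
  hH.1 h hh

lemma IsSat.not_separated (hH : IsSat (M1r r) r H) {e h : Finset (Fin n)} (he : e ∈ H)
    (hh : h ∈ H) : ¬ Separated e h := fun hs =>
  hH.2.1 (hasCopy_of_separated H he hh (hH.1 e he) (hH.1 h hh) hs)

lemma IsSat.exists_separated (hr : 2 ≤ r) (hH : IsSat (M1r r) r H) {e : Finset (Fin n)}
    (hec : e.card = r) (he : e ∉ H) : ∃ h ∈ H, Separated e h ∨ Separated h e := by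
  obtain ⟨e₁, h₁, e₂, h₂, hs⟩ := exists_separated_of_hasCopy hr _ (hH.2.2 e hec he)
  rcases Finset.mem_insert.mp h₁ with rfl | k₁ <;> rcases Finset.mem_insert.mp h₂ with rfl | k₂
  · obtain ⟨c, d, hcd, hcd'⟩ := hs
    obtain ⟨x, hx⟩ : e₂.Nonempty := Finset.card_pos.mp (by omega)
    exact absurd (hcd hx) (hcd' x hx)
  · exact ⟨e₂, k₂, Or.inl hs⟩
  · exact ⟨e₁, k₁, Or.inr hs⟩
  · exact absurd hs (hH.not_separated k₁ k₂)

/-- A set separated from `e` lies in a gap of `e`. Hence, for `a, b ∈ e`, it avoids `a` and `b`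
and lies on one side of the chord `ab`. -/
lemma gap_of_separated {e h : Finset (Fin n)} {a b : Fin n} (ha : a ∈ e) (hb : b ∈ e)
    (hs : Separated e h ∨ Separated h e) :
    a ∉ h ∧ b ∉ h ∧ (h ⊆ arcCC a b ∨ ∀ x ∈ h, x ∉ arcCC a b) := by
  rcases hs with ⟨c, d, h1, h2⟩ | ⟨c, d, h1, h2⟩
  · have hac := h1 ha
    have hbc := h1 hb
    refine ⟨fun h => h2 a h hac, fun h => h2 b h hbc, ?_⟩
    have : (∀ x, x ∉ arcCC c d → x ∈ arcCC a b) ∨ ∀ x, x ∉ arcCC c d → x ∉ arcCC a b := by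
      by_contra hcon
      push Not at hcon
      obtain ⟨⟨x, hx, hx'⟩, y, hy, hy'⟩ := hcon
      rw [mem_arcCC] at *
      omega
    rcases this with h | h
    · exact Or.inl fun x hx => h x (h2 x hx)
    · exact Or.inr fun x hx => h x (h2 x hx)
  · have hac := h2 a ha
    have hbc := h2 b hb
    refine ⟨fun h => hac (h1 h), fun h => hbc (h1 h), ?_⟩
    have : (∀ x, x ∈ arcCC c d → x ∈ arcCC a b) ∨ ∀ x, x ∈ arcCC c d → x ∉ arcCC a b := by
      by_contra hcon
      push Not at hcon
      obtain ⟨⟨x, hx, hx'⟩, y, hy, hy'⟩ := hcon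
      rw [mem_arcCC] at *
      omega
    rcases this with h | h
    · exact Or.inl fun x hx => h x (h1 hx)
    · exact Or.inr fun x hx => h x (h1 hx)

lemma Full.mono {a b c d : Fin n} (h : Full H a b) (hs : ∀ x ∈ arcCC a b, x ∈ arcCC c d) :
    Full H c d := by
  obtain ⟨e, he, hab⟩ := h
  exact ⟨e, he, fun x hx => hs x (hab hx)⟩

variable [NeZero n]

lemma IsSat.not_full_self (hr : 2 ≤ r) (hH : IsSat (M1r r) r H) (a : Fin n) : ¬ Full H a a := by
  rintro ⟨e, he, hs⟩
  have h1 := Finset.card_le_card hs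
  rw [card_arcCC, hH.card_eq he, sub_self, Fin.val_zero] at h1
  omega

lemma mem_arcCC_compl (hn : 2 ≤ n) {a b : Fin n} (hab : b + 1 ≠ a) (x : Fin n) :
    x ∈ arcCC (b + 1) (a - 1) ↔ x ∉ arcCC a b := by
  rw [Ne, Fin.ext_iff] at hab
  rw [mem_arcCC, mem_arcCC]
  have := val_add_one_cases hn b
  have := val_sub_one_cases hn a
  have := x.2
  have := a.2
  have := b.2
  omega

/-- An arc with at least `r` points contains an `r`-set using both of its endpoints; this is where
`2 ≤ r` enters. -/
lemma exists_spanning (hr : 2 ≤ r) {a b : Fin n} (hab : r ≤ (arcCC a b).card) :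
    ∃ e : Finset (Fin n), e.card = r ∧ a ∈ e ∧ b ∈ e ∧ e ⊆ arcCC a b := by
  have hne : a ≠ b := by
    rintro rfl
    rw [card_arcCC, sub_self, Fin.val_zero] at hab
    omega
  have hsub : ({a, b} : Finset (Fin n)) ⊆ arcCC a b := by
    intro x hx
    rw [mem_arcCC]
    rcases Finset.mem_insert.mp hx with rfl | hx
    · omega
    · rw [Finset.mem_singleton] at hx
      subst hx
      omega
  obtain ⟨e, h1, h2, h3⟩ := Finset.exists_subsuperset_card_eq hsub
    (by rw [Finset.card_pair hne]; exact hr) hab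
  exact ⟨e, h3, h1 (by simp), h1 (by simp), h2⟩

/-- Take an `r`-set `e ⊆ [a, b]` through `a` and `b`. If it is not an edge, an edge separated from
it lies in `[a, b]` or in the complementary arc. -/
lemma IsSat.full_or_of_card (hr : 2 ≤ r) (hn : 2 ≤ n) (hH : IsSat (M1r r) r H) {a b : Fin n}
    (hab : b + 1 ≠ a) (hc : r ≤ (arcCC a b).card) : Full H a b ∨ Full H (b + 1) (a - 1) := by
  obtain ⟨e, hec, ha, hb, hs⟩ := exists_spanning hr hc
  by_cases he : e ∈ H
  · exact Or.inl ⟨e, he, hs⟩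
  · obtain ⟨h, hh, hsep⟩ := hH.exists_separated hr hec he
    rcases (gap_of_separated ha hb hsep).2.2 with h1 | h1
    · exact Or.inl ⟨h, hh, h1⟩
    · exact Or.inr ⟨h, hh, fun x hx => (mem_arcCC_compl hn hab x).mpr (h1 x hx)⟩

/-- Of two complementary nonempty arcs, exactly one contains an edge. As `2 * r ≤ n`, one of them
has at least `r` points. -/
lemma IsSat.full_compl_iff (hr : 2 ≤ r) (hn : 2 * r ≤ n) (hH : IsSat (M1r r) r H) {a b : Fin n}
    (hab : b + 1 ≠ a) : Full H (b + 1) (a - 1) ↔ ¬ Full H a b := by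
  have hn2 : 2 ≤ n := by omega
  constructor
  · rintro ⟨e, he, hes⟩ ⟨h, hh, hhs⟩
    exact hH.not_separated hh he ⟨a, b, hhs, fun x hx => (mem_arcCC_compl hn2 hab x).mp (hes hx)⟩
  · intro hnf
    rcases le_or_gt r (arcCC a b).card with hc | hc
    · exact (hH.full_or_of_card hr hn2 hab hc).resolve_left hnf
    · have hcompl : arcCC (b + 1) (a - 1) = (arcCC a b)ᶜ := by
        ext x
        rw [Finset.mem_compl, mem_arcCC_compl hn2 hab]
      have hc' : r ≤ (arcCC (b + 1) (a - 1)).card := by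
        rw [hcompl, Finset.card_compl, Fintype.card_fin]
        omega
      have := hH.full_or_of_card hr hn2 (a := b + 1) (b := a - 1)
        (by rw [sub_add_cancel]; exact hab.symm) hc'
      rw [sub_add_cancel, add_sub_cancel_right] at this
      exact this.resolve_right hnf

/-- Suppose `[a, b]` is full and each edge inside it uses `a` or `b`. An `r`-set through `a` and `b`
is then an edge, since an edge separated from it would lie strictly inside `[a, b]`, or in the
complementary arc, which is not full. -/
lemma IsSat.exists_spanning_edge (hr : 2 ≤ r) (hH : IsSat (M1r r) r H)
    {a b : Fin n} (hf : Full H a b) (hends : ∀ g ∈ H, g ⊆ arcCC a b → a ∈ g ∨ b ∈ g) :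
    ∃ e ∈ H, a ∈ e ∧ b ∈ e ∧ e ⊆ arcCC a b := by
  obtain ⟨g, hg, hgs⟩ := hf
  obtain ⟨e, hec, ha, hb, hs⟩ := exists_spanning hr
    ((hH.card_eq hg).symm.le.trans (Finset.card_le_card hgs))
  refine ⟨e, ?_, ha, hb, hs⟩
  by_contra he
  obtain ⟨h, hh, hsep⟩ := hH.exists_separated hr hec he
  obtain ⟨ha', hb', h1 | h1⟩ := gap_of_separated ha hb hsep
  · exact (hends h hh h1).elim ha' hb'
  · exact hH.not_separated hg hh ⟨a, b, hgs, h1⟩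

lemma IsSat.exists_full_threshold_left (hr : 2 ≤ r) (hn : 2 ≤ n) (hH : IsSat (M1r r) r H)
    {j v : Fin n} (hf : Full H j v) :
    ∃ a, a ∈ arcCC j v ∧ Full H a v ∧ ¬ Full H (a + 1) v := by
  classical
  obtain ⟨a, ha, hmin⟩ := Finset.exists_min_image
    (Finset.univ.filter fun a => Full H a v) (fun a => ((v - a : Fin n) : ℕ)) ⟨j, by simpa using hf⟩
  simp only [Finset.mem_filter, Finset.mem_univ, true_and] at ha hmin
  have hav : a ≠ v := fun h => hH.not_full_self hr v (h ▸ ha)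
  rw [Ne, Fin.ext_iff] at hav
  refine ⟨a, ?_, ha, fun hcon => ?_⟩
  · have := hmin j hf
    rw [mem_arcCC]
    have := v.2
    have := a.2
    have := j.2
    rcases val_sub_cases v a with h | h <;> rcases val_sub_cases v j with h' | h' <;> omega
  · have := hmin _ hcon
    have := v.2
    have := a.2
    rcases val_sub_cases v a with h | h <;> rcases val_sub_cases v (a + 1) with h' | h' <;>
      rcases val_add_one_cases hn a with h'' | h'' <;> omega

lemma IsSat.exists_full_threshold_right (hr : 2 ≤ r) (hn : 2 ≤ n) (hH : IsSat (M1r r) r H)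
    {j v : Fin n} (hf : Full H v j) :
    ∃ b, b ∈ arcCC v j ∧ Full H v b ∧ ¬ Full H v (b - 1) := by
  classical
  obtain ⟨a, ha, hmin⟩ := Finset.exists_min_image
    (Finset.univ.filter fun a => Full H v a) (fun a => ((a - v : Fin n) : ℕ)) ⟨j, by simpa using hf⟩
  simp only [Finset.mem_filter, Finset.mem_univ, true_and] at ha hmin
  have hav : a ≠ v := fun h => hH.not_full_self hr v (h ▸ ha)
  rw [Ne, Fin.ext_iff] at hav
  refine ⟨a, ?_, ha, fun hcon => ?_⟩
  · have := hmin j hf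
    rw [mem_arcCC]
    have := v.2
    have := a.2
    have := j.2
    rcases val_sub_cases a v with h | h <;> rcases val_sub_cases j v with h' | h' <;> omega
  · have := hmin _ hcon
    have := v.2
    have := a.2
    rcases val_sub_cases a v with h | h <;> rcases val_sub_cases (a - 1) v with h' | h' <;>
      rcases val_sub_one_cases hn a with h'' | h'' <;> omega

/-- The requirement `v ∈ h` in the definition of `λ` can be dropped: if `[j, v]` contains an edge
then it contains an edge through `v`. Apply `exists_spanning_edge` to the shortest full arc
`[a, v] ⊆ [j, v]`. -/
lemma IsSat.exists_edge_mem_right (hr : 2 ≤ r) (hn : 2 ≤ n) (hH : IsSat (M1r r) r H)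
    {j v : Fin n} : (∃ h ∈ H, v ∈ h ∧ h ⊆ arcCC j v) ↔ Full H j v := by
  refine ⟨fun ⟨h, hh, _, hs⟩ => ⟨h, hh, hs⟩, fun hf => ?_⟩
  obtain ⟨a, haj, ha, ha'⟩ := hH.exists_full_threshold_left hr hn hf
  have hav : a ≠ v := fun h => hH.not_full_self hr v (h ▸ ha)
  rw [Ne, Fin.ext_iff] at hav
  obtain ⟨e, he, -, hv, hes⟩ := hH.exists_spanning_edge hr ha (fun g hg hgs => by
    by_contra hcon
    push Not at hcon
    refine ha' ⟨g, hg, fun x hx => ?_⟩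
    have hxa : x ≠ a := fun h => hcon.1 (h ▸ hx)
    rw [Ne, Fin.ext_iff] at hxa
    have := hgs hx
    rw [mem_arcCC] at *
    have := val_add_one_cases hn a
    omega)
  refine ⟨e, he, hv, fun x hx => ?_⟩
  have := hes hx
  rw [mem_arcCC] at *
  omega

/-- The mirror image of `exists_edge_mem_right`, for the definition of `ρ`. -/
lemma IsSat.exists_edge_mem_left (hr : 2 ≤ r) (hn : 2 ≤ n) (hH : IsSat (M1r r) r H)
    {j v : Fin n} : (∃ h ∈ H, v ∈ h ∧ h ⊆ arcCC v j) ↔ Full H v j := by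
  refine ⟨fun ⟨h, hh, _, hs⟩ => ⟨h, hh, hs⟩, fun hf => ?_⟩
  obtain ⟨a, haj, ha, ha'⟩ := hH.exists_full_threshold_right hr hn hf
  have hav : a ≠ v := fun h => hH.not_full_self hr v (h ▸ ha)
  rw [Ne, Fin.ext_iff] at hav
  obtain ⟨e, he, hv, -, hes⟩ := hH.exists_spanning_edge hr ha (fun g hg hgs => by
    by_contra hcon
    push Not at hcon
    refine ha' ⟨g, hg, fun x hx => ?_⟩
    have hxa : x ≠ a := fun h => hcon.2 (h ▸ hx)
    rw [Ne, Fin.ext_iff] at hxa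
    have := hgs hx
    rw [mem_arcCC] at *
    have := val_sub_one_cases hn a
    omega)
  refine ⟨e, he, hv, fun x hx => ?_⟩
  have := hes hx
  rw [mem_arcCC] at *
  omega

/-! ### The maps `λ` and `ρ` -/

lemma IsSat.ne_of_full (hr : 2 ≤ r) (hH : IsSat (M1r r) r H) {a b : Fin n} (h : Full H a b) :
    (a : ℕ) ≠ b := fun hab => hH.not_full_self hr b (Fin.ext hab ▸ h)

lemma IsSat.full_wrap (hr : 2 ≤ r) (hn : 2 * r ≤ n) (hH : IsSat (M1r r) r H) (v : Fin n) :
    Full H (v + 1) (v - 1) := by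
  refine (hH.full_compl_iff hr hn ?_).mpr (hH.not_full_self hr v)
  rw [Ne, Fin.ext_iff]
  have := val_add_one_cases (by omega) v
  omega

lemma IsSat.full_all (hr : 2 ≤ r) (hn : 2 * r ≤ n) (hH : IsSat (M1r r) r H) {a b : Fin n}
    (hab : b + 1 = a) : Full H a b := by
  refine (hH.full_wrap hr hn b).mono fun x _ => ?_
  subst hab
  rw [mem_arcCC]
  have := val_add_one_cases (by omega) b
  have := x.2
  omega

lemma IsSat.isLam_iff (hr : 2 ≤ r) (hn : 2 ≤ n) (hH : IsSat (M1r r) r H) (v j : Fin n) :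
    IsLam H v j ↔ Full H j v ∧ ¬ Full H (j + 1) v := by
  rw [IsLam, hH.exists_edge_mem_right hr hn, hH.exists_edge_mem_right hr hn]

lemma IsSat.isRho_iff (hr : 2 ≤ r) (hn : 2 ≤ n) (hH : IsSat (M1r r) r H) (v j : Fin n) :
    IsRho H v j ↔ Full H v j ∧ ¬ Full H v (j - 1) := by
  rw [IsRho, hH.exists_edge_mem_left hr hn, hH.exists_edge_mem_left hr hn]

lemma IsSat.isLam_unique (hr : 2 ≤ r) (hn : 2 ≤ n) (hH : IsSat (M1r r) r H) {v j k : Fin n}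
    (hj : IsLam H v j) (hk : IsLam H v k) : j = k := by
  rw [hH.isLam_iff hr hn] at hj hk
  have nj := hH.ne_of_full hr hj.1
  have nk := hH.ne_of_full hr hk.1
  have cj := val_add_one_cases hn j
  have ck := val_add_one_cases hn k
  by_contra hne
  rw [Fin.ext_iff] at hne
  have : (∀ x ∈ arcCC j v, x ∈ arcCC (k + 1) v) ∨ ∀ x ∈ arcCC k v, x ∈ arcCC (j + 1) v := by
    by_contra hcon
    push Not at hcon
    obtain ⟨⟨x, hx, hx'⟩, y, hy, hy'⟩ := hcon
    rw [mem_arcCC] at *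
    omega
  rcases this with h | h
  · exact hk.2 (hj.1.mono h)
  · exact hj.2 (hk.1.mono h)

lemma IsSat.lamF_spec (hr : 2 ≤ r) (hn : 2 * r ≤ n) (hH : IsSat (M1r r) r H) (v : Fin n) :
    IsLam H v (lamF H v) := by
  have hex : ∃ j, IsLam H v j := by
    obtain ⟨a, -, ha⟩ := hH.exists_full_threshold_left hr (by omega)
      (hH.full_all hr hn (rfl : v + 1 = v + 1))
    exact ⟨a, (hH.isLam_iff hr (by omega) v a).mpr ha⟩
  unfold lamF
  rw [dif_pos hex]
  exact hex.choose_spec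

lemma IsSat.lamF_eq_iff (hr : 2 ≤ r) (hn : 2 * r ≤ n) (hH : IsSat (M1r r) r H) (v j : Fin n) :
    lamF H v = j ↔ Full H j v ∧ ¬ Full H (j + 1) v := by
  rw [← hH.isLam_iff hr (by omega)]
  exact ⟨fun h => h ▸ hH.lamF_spec hr hn v,
    fun h => hH.isLam_unique hr (by omega) (hH.lamF_spec hr hn v) h⟩

/-- `ρ(v) = λ(v - 1)`: pass to complementary arcs in the definition of `ρ(v)`. -/
lemma IsSat.isRho_iff_lamF (hr : 2 ≤ r) (hn : 2 * r ≤ n) (hH : IsSat (M1r r) r H) (v j : Fin n) :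
    IsRho H v j ↔ lamF H (v - 1) = j := by
  rw [hH.isRho_iff hr (by omega), hH.lamF_eq_iff hr hn]
  by_cases h1 : j = v
  · subst h1
    exact iff_of_false (fun h => hH.not_full_self hr j h.1) (fun h => h.2 (hH.full_wrap hr hn j))
  by_cases h2 : j + 1 = v
  · subst h2
    rw [add_sub_cancel_right]
    exact iff_of_false (fun h => h.2 (hH.full_wrap hr hn j)) (fun h => hH.not_full_self hr j h.1)
  · have c1 := hH.full_compl_iff hr hn (a := v) (b := j - 1) (by rwa [sub_add_cancel])
    rw [sub_add_cancel] at c1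
    rw [c1, hH.full_compl_iff hr hn h2, not_not, and_comm]

lemma IsSat.rhoF_eq (hr : 2 ≤ r) (hn : 2 * r ≤ n) (hH : IsSat (M1r r) r H) (v : Fin n) :
    rhoF H v = lamF H (v - 1) := by
  have hex : ∃ j, IsRho H v j := ⟨_, (hH.isRho_iff_lamF hr hn v _).mpr rfl⟩
  unfold rhoF
  rw [dif_pos hex]
  exact ((hH.isRho_iff_lamF hr hn v _).mp hex.choose_spec).symm

lemma IsSat.lamF_ne (hr : 2 ≤ r) (hn : 2 * r ≤ n) (hH : IsSat (M1r r) r H) (v : Fin n) :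
    lamF H v ≠ v := fun h =>
  hH.ne_of_full hr ((hH.lamF_eq_iff hr hn v v).mp h).1 rfl

/-- `λρλ = λ`, with `ρ` written as `v ↦ λ(v - 1)`. -/
lemma IsSat.lamF_lamF_sub_one (hr : 2 ≤ r) (hn : 2 * r ≤ n) (hH : IsSat (M1r r) r H) (v : Fin n) :
    lamF H (lamF H (lamF H v - 1)) = lamF H v := by
  obtain ⟨f1, f2⟩ := (hH.lamF_eq_iff hr hn v _).mp rfl
  set w := lamF H v
  obtain ⟨g1, g2⟩ := (hH.isRho_iff hr (by omega) w _).mp ((hH.isRho_iff_lamF hr hn w _).mpr rfl)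
  set j := lamF H (w - 1)
  rw [hH.lamF_eq_iff hr hn]
  refine ⟨g1, fun hcon => ?_⟩
  have n1 := hH.ne_of_full hr g1
  have n2 := hH.ne_of_full hr f1
  have cj := val_sub_one_cases (by omega) j
  have cw := val_add_one_cases (by omega) w
  have : (∀ x ∈ arcCC w v, x ∈ arcCC w (j - 1)) ∨ ∀ x ∈ arcCC (w + 1) j, x ∈ arcCC (w + 1) v := by
    by_contra hcon
    push Not at hcon
    obtain ⟨⟨x, hx, hx'⟩, y, hy, hy'⟩ := hcon
    rw [mem_arcCC] at *
    omega
  rcases this with h | h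
  · exact g2 (f1.mono h)
  · exact f2 (hcon.mono h)

/-- `ρλρ = ρ` at the point `u + 1`, with `ρ` written as `v ↦ λ(v - 1)`. Thus `ρ` inverts `λ` on
the range of `λ`. -/
lemma IsSat.lamF_lamF_lamF_sub_one (hr : 2 ≤ r) (hn : 2 * r ≤ n) (hH : IsSat (M1r r) r H)
    (u : Fin n) : lamF H (lamF H (lamF H u) - 1) = lamF H u := by
  obtain ⟨g1, g2⟩ := (hH.isRho_iff hr (by omega) (u + 1) (lamF H u)).mp
    ((hH.isRho_iff_lamF hr hn (u + 1) _).mpr (by rw [add_sub_cancel_right]))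
  set z := u + 1
  set w := lamF H u
  obtain ⟨f1, f2⟩ := (hH.lamF_eq_iff hr hn w _).mp rfl
  set j := lamF H w
  rw [← hH.isRho_iff_lamF hr hn, hH.isRho_iff hr (by omega)]
  refine ⟨f1, fun hcon => ?_⟩
  have n1 := hH.ne_of_full hr g1
  have n2 := hH.ne_of_full hr f1
  have cj := val_add_one_cases (by omega) j
  have cw := val_sub_one_cases (by omega) w
  have : (∀ x ∈ arcCC z w, x ∈ arcCC (j + 1) w) ∨ ∀ x ∈ arcCC j (w - 1), x ∈ arcCC z (w - 1) := by
    by_contra hcon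
    push Not at hcon
    obtain ⟨⟨x, hx, hx'⟩, y, hy, hy'⟩ := hcon
    rw [mem_arcCC] at *
    omega
  rcases this with h | h
  · exact f2 (g1.mono h)
  · exact g2 (hcon.mono h)

/-- `λ` can only change value at points of its own range: if `[λ(v), v - 1]` is not full, then
`v = ρ(λ(v))` is a value of `ρ`, hence of `λ`. -/
lemma IsSat.lamF_sub_one_of_notMem (hr : 2 ≤ r) (hn : 2 * r ≤ n) (hH : IsSat (M1r r) r H)
    {v : Fin n} (hv : v ∉ Set.range (lamF H)) : lamF H (v - 1) = lamF H v := by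
  obtain ⟨f1, f2⟩ := (hH.lamF_eq_iff hr hn v _).mp rfl
  set j := lamF H v
  by_cases hf : Full H j (v - 1)
  · refine (hH.lamF_eq_iff hr hn _ _).mpr ⟨hf, fun hcon => f2 (hcon.mono fun x hx => ?_)⟩
    have n1 := hH.ne_of_full hr f1
    have n2 := hH.ne_of_full hr hf
    have cj := val_add_one_cases (by omega) j
    have cv := val_sub_one_cases (by omega) v
    rw [mem_arcCC] at *
    omega
  · exact absurd ⟨j - 1, (hH.isRho_iff_lamF hr hn j v).mp
      ((hH.isRho_iff hr (by omega) j v).mpr ⟨f1, hf⟩)⟩ hv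

/-- `λ²` moves a point to the next point `s` of the range of `λ`: `λ` is constant on `[w, s - 1]`,
and `λ(λ(s - 1)) = λ(ρ(s)) = s`. -/
lemma IsSat.lamF_lamF_eq_of_succ (hr : 2 ≤ r) (hn : 2 * r ≤ n) (hH : IsSat (M1r r) r H)
    {w s : Fin n} (hs : s ∈ Set.range (lamF H)) (hws : w < s)
    (hgap : ∀ x, w < x → x < s → x ∉ Set.range (lamF H)) : lamF H (lamF H w) = s := by
  have hconst : ∀ k : ℕ, ∀ u : Fin n, (u : ℕ) = w + k → u < s → lamF H u = lamF H w := by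
    intro k
    induction k with
    | zero => intro u hu _; rw [Fin.ext hu]
    | succ k ih =>
      intro u hu hus
      have c := val_sub_one_cases (by omega) u
      rw [← hH.lamF_sub_one_of_notMem hr hn (hgap u (by rw [Fin.lt_def]; omega) hus)]
      exact ih _ (by omega) (by rw [Fin.lt_def] at *; omega)
  have c := val_sub_one_cases (by omega) s
  rw [Fin.lt_def] at hws
  rw [← hconst (s - 1 - w) (s - 1) (by omega) (by rw [Fin.lt_def]; omega)]
  obtain ⟨v, rfl⟩ := hs
  exact hH.lamF_lamF_sub_one hr hn v

/-- Enumeration of the range of `λ` by iterating `λ²`, with `s₀` its least point and `N` its size: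
the first `N` iterates increase, the next one is `s₀` again, and `λ(s₀)` occurs among them. -/
lemma IsSat.exists_enumeration (hr : 2 ≤ r) (hn : 2 * r ≤ n) (hH : IsSat (M1r r) r H) :
    ∃ (N : ℕ) (s₀ : Fin n), 0 < N ∧ s₀ ∈ Set.range (lamF H) ∧
      (∀ p q, p < q → q < N → (lamF H)^[2 * p] s₀ < (lamF H)^[2 * q] s₀) ∧
      (lamF H)^[2 * N] s₀ = s₀ ∧ ∃ q < N, lamF H s₀ = (lamF H)^[2 * q] s₀ := by
  classical
  set T := lamF H with hT
  let S : Finset (Fin n) := Finset.univ.image T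
  have hS : ∀ x, x ∈ S ↔ x ∈ Set.range T := fun x => by simp [S]
  have hpos : 0 < S.card := Finset.card_pos.mpr ⟨T 0, (hS _).mpr ⟨0, rfl⟩⟩
  let s := S.orderEmbOfFin rfl
  have hmem : ∀ i, s i ∈ Set.range T := fun i => (hS _).mp (Finset.orderEmbOfFin_mem _ _ _)
  have hex : ∀ x ∈ Set.range T, ∃ i, s i = x := by
    intro x hx
    have : x ∈ Set.range s := by
      rw [Finset.range_orderEmbOfFin]
      exact Finset.mem_coe.mpr ((hS x).mpr hx)
    exact this
  have hinj : ∀ x ∈ Set.range T, ∀ y ∈ Set.range T, T x = T y → x = y := by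
    rintro _ ⟨x, rfl⟩ _ ⟨y, rfl⟩ h
    rw [hT, ← hH.lamF_lamF_lamF_sub_one hr hn x, ← hH.lamF_lamF_lamF_sub_one hr hn y, ← hT, h]
  have hsucc : ∀ i (hi : i + 1 < S.card), T (T (s ⟨i, by omega⟩)) = s ⟨i + 1, hi⟩ := by
    intro i hi
    refine hH.lamF_lamF_eq_of_succ hr hn (hmem _) (s.strictMono (Nat.lt_succ_self i)) ?_
    intro x h1 h2 hx
    obtain ⟨k, rfl⟩ := hex x hx
    have h1' : i < (k : ℕ) := s.lt_iff_lt.mp h1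
    have h2' : (k : ℕ) < i + 1 := s.lt_iff_lt.mp h2
    omega
  have hiter : ∀ p (hp : p < S.card), T^[2 * p] (s ⟨0, hpos⟩) = s ⟨p, hp⟩ := by
    intro p
    induction p with
    | zero => intro _; rfl
    | succ p ih =>
      intro hp
      rw [show 2 * (p + 1) = 2 * p + 1 + 1 by ring, Function.iterate_succ_apply',
        Function.iterate_succ_apply', ih (by omega), hsucc p hp]
  refine ⟨S.card, s ⟨0, hpos⟩, hpos, hmem _, ?_, ?_, ?_⟩
  · intro p q hpq hq
    rw [hiter p (by omega), hiter q hq]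
    exact s.strictMono hpq
  · -- `T ∘ T` is injective on the range, and every later point already has a preimage
    obtain ⟨k, hk⟩ := hex (T (T (s ⟨S.card - 1, by omega⟩))) ⟨_, rfl⟩
    have hlast : T^[2 * S.card] (s ⟨0, hpos⟩) = T (T (s ⟨S.card - 1, by omega⟩)) := by
      rw [show 2 * S.card = 2 * (S.card - 1) + 1 + 1 by omega, Function.iterate_succ_apply',
        Function.iterate_succ_apply', hiter]
    rw [hlast, ← hk]
    congr 1
    rw [Fin.ext_iff]
    by_contra hk0
    change (k : ℕ) ≠ 0 at hk0
    have h1 := hsucc (k - 1) (by have := k.2; omega)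
    have h2 : (⟨(k : ℕ) - 1 + 1, by have := k.2; omega⟩ : Fin S.card) = k := Fin.ext (by
      show (k : ℕ) - 1 + 1 = k
      omega)
    rw [h2, hk] at h1
    have h3 := s.injective (hinj _ (hmem _) _ (hmem _) (hinj _ ⟨_, rfl⟩ _ ⟨_, rfl⟩ h1))
    rw [Fin.mk.injEq] at h3
    have := k.2
    omega
  · obtain ⟨k, hk⟩ := hex (T (s ⟨0, hpos⟩)) ⟨_, rfl⟩
    exact ⟨k, k.2, by rw [hiter k k.2, hk]⟩
end

/-! ### The odd cycle -/

-- STATEMENT 17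
theorem exists_odd_cycle (n r : ℕ) [NeZero n] (hr : 2 ≤ r) (hn : 2 * r ≤ n)
    (H : Finset (Finset (Fin n))) (hH : IsSat (M1r r) r H) :
    ∃ ℓ : ℕ, 1 ≤ ℓ ∧ ∃ w : Fin (2 * ℓ + 1) → Fin n, SemiValid ℓ w ∧
      ∀ i : Fin (2 * ℓ + 1), lamF H (w i) = w (i + 1) ∧ rhoF H (w i) = w (i - 1) := by
  obtain ⟨N, s₀, hN, hs₀, hmono, hper, q, hqN, hq⟩ := hH.exists_enumeration hr hn
  have hrho : ∀ x ∈ Set.range (lamF H), lamF H (lamF H x - 1) = x := by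
    rintro _ ⟨x, rfl⟩
    exact hH.lamF_lamF_lamF_sub_one hr hn x
  have hne := hH.lamF_ne hr hn
  simp only [hH.rhoF_eq hr hn]
  generalize lamF H = T at *
  have hmem : ∀ k, T^[k] s₀ ∈ Set.range T := by
    intro k
    cases k with
    | zero => exact hs₀
    | succ k => rw [Function.iterate_succ_apply']; exact ⟨_, rfl⟩
  have hinj2 : ∀ i < N, ∀ j < N, T^[2 * i] s₀ = T^[2 * j] s₀ → i = j := by
    intro i hi j hj h
    rcases lt_trichotomy i j with h' | h' | h'
    · exact absurd h (hmono i j h' hj).ne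
    · exact h'
    · exact absurd h (hmono j i h' hi).ne'
  have hq0 : q ≠ 0 := by
    rintro rfl
    exact hne s₀ hq
  -- `T` is injective on its range, so `T s₀ = T^[2q] s₀` gives an odd period
  have hodd : T^[2 * q - 1] s₀ = s₀ := by
    have h1 : T (T^[2 * q - 1] s₀) = T s₀ := by
      rw [← Function.iterate_succ_apply' T, hq]
      congr 2
      omega
    rw [← hrho _ (hmem _), h1, hrho _ hs₀]
  -- applying the odd period twice shows that `N` divides it
  have hNq : 2 * q - 1 = N := by
    have h2 : T^[2 * (2 * q - 1)] s₀ = s₀ := by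
      rw [two_mul, Function.iterate_add_apply, hodd, hodd]
    by_contra hcon
    rcases lt_or_ge (2 * q - 1) N with h | h
    · have := hinj2 (2 * q - 1) h 0 hN h2
      omega
    · have h3 : T^[2 * (2 * q - 1 - N)] s₀ = s₀ := by
        rw [show 2 * (2 * q - 1) = 2 * (2 * q - 1 - N) + 2 * N by omega,
          Function.iterate_add_apply, hper] at h2
        exact h2
      have := hinj2 (2 * q - 1 - N) (by omega) 0 hN h3
      omega
  obtain ⟨ℓ, rfl⟩ : ∃ ℓ, N = 2 * ℓ + 1 := ⟨q - 1, by omega⟩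
  rw [hNq] at hodd
  have hmod : ∀ k, T^[k % (2 * ℓ + 1)] s₀ = T^[k] s₀ := fun k =>
    Function.IsPeriodicPt.iterate_mod_apply hodd k
  have hstep : ∀ i : Fin (2 * ℓ + 1),
      T (T^[(i : ℕ)] s₀) = T^[((i + 1 : Fin (2 * ℓ + 1)) : ℕ)] s₀ := by
    intro i
    rw [Fin.val_add, hmod, ← Function.iterate_succ_apply' T, Fin.val_one',
      ← hmod (_ + 1 % _), Nat.add_mod_mod, hmod]
  have hℓ : 1 ≤ ℓ := by
    by_contra hcon
    obtain rfl : ℓ = 0 := by omega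
    exact hne s₀ hodd
  refine ⟨ℓ, hℓ, fun i => T^[(i : ℕ)] s₀, ⟨?_, 0, ?_⟩, fun i => ⟨hstep i, ?_⟩⟩
  · intro i j hij
    change T^[(i : ℕ)] s₀ = T^[(j : ℕ)] s₀ at hij
    have hdouble : ∀ a b : ℕ, T^[a] s₀ = T^[b] s₀ → T^[2 * a] s₀ = T^[2 * b] s₀ := by
      intro a b hab
      rw [two_mul, two_mul, Function.iterate_add_apply, hab, ← Function.iterate_add_apply,
        add_comm, Function.iterate_add_apply, hab, ← Function.iterate_add_apply]
    exact Fin.ext (hinj2 i i.2 j j.2 (hdouble i j hij))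
  · rw [List.rotate_zero]
    refine List.isChain_iff_pairwise.mpr (List.pairwise_ofFn.mpr fun i j hij => ?_)
    simp only [hmod]
    exact hmono i j hij j.2
  · have := hstep (i - 1)
    rw [sub_add_cancel] at this
    show T (T^[(i : ℕ)] s₀ - 1) = _
    rw [← this]
    exact hrho _ (hmem _)
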